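/- Let (G,w) be a 2-connected weighted graph with nowhere-zero real weights whose weighted vertex spanning-tree polynomial is real stable. Then the weight function w has constant sign on all edges of G. -/

import Mathlib

def RealStable {σ : Type*} (P : MvPolynomial σ ℝ) : Prop :=
  ∀ z : σ → ℂ, (∀ i, 0 < (z i).im) → MvPolynomial.aeval z P ≠ 0

open scoped Classical in
/-- The weighted vertex spanning-tree polynomial
`P_{G,w} = Σ_{T spanning tree of G} (Π_{e∈T} w(e)) · Π_v x_v^{deg_T(v)−1}`. -/
noncomputable def treePoly {V : Type*} [Fintype V] [DecidableEq V]
    (G : SimpleGraph V) (w : Sym2 V → ℝ) : MvPolynomial V ℝ :=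
  ∑ T ∈ Finset.univ.filter (fun T : SimpleGraph V => T ≤ G ∧ T.IsTree),
    MvPolynomial.C (∏ e ∈ T.edgeFinset, w e) *
      ∏ v, MvPolynomial.X v ^ (T.degree v - 1)

theorem multiset_bound (r : ℝ) (hr : 0 < r) (m : Multiset ℂ) (h : ∀ a ∈ m, r ≤ ‖a‖) :
    ‖(m.map (fun a => 1 - a)).prod‖ ≤
      ‖(m.map (fun a => 0 - a)).prod‖ * (1 + 1 / r) ^ m.card := by
  induction m using Multiset.induction_on with
  | empty => simp
  | cons a m ih =>
    have ih := ih (fun b hb => h b (Multiset.mem_cons_of_mem hb))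
    have ha := h a (Multiset.mem_cons_self a m)
    simp only [Multiset.map_cons, Multiset.prod_cons, norm_mul, Multiset.card_cons]
    have h1 : ‖1 - a‖ ≤ ‖0 - a‖ * (1 + 1 / r) := by
      have h2 : ‖1 - a‖ ≤ 1 + ‖a‖ := by simpa using norm_sub_le (1 : ℂ) a
      have h3 : 1 ≤ ‖a‖ * (1 / r) := by
        rw [mul_one_div, le_div_iff₀ hr]; linarith
      rw [zero_sub, norm_neg]
      linarith
    calc _ ≤ (‖0 - a‖ * (1 + 1 / r)) *
          (‖(m.map (fun a => 0 - a)).prod‖ * (1 + 1 / r) ^ m.card) := by gcongr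
      _ = _ := by ring

theorem root_bound (p : Polynomial ℂ) (r : ℝ) (hr : 0 < r)
    (h : ∀ s : ℂ, ‖s‖ ≤ r → p.eval s ≠ 0) (n : ℕ) (hn : p.natDegree ≤ n) :
    ‖p.eval 1‖ ≤ ‖p.eval 0‖ * (1 + 1 / r) ^ n := by
  have hs := IsAlgClosed.splits p
  rw [hs.eval_eq_prod_roots, hs.eval_eq_prod_roots, norm_mul, norm_mul, mul_assoc]
  refine mul_le_mul_of_nonneg_left ?_ (norm_nonneg _)
  refine (multiset_bound r hr p.roots ?_).trans ?_
  · intro a ha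
    by_contra hc
    exact h a (not_le.mp hc).le (Polynomial.isRoot_of_mem_roots ha)
  · have h1 : 1 ≤ 1 + 1 / r := by have := one_div_pos.mpr hr; linarith
    have : p.roots.card ≤ n := (Polynomial.card_roots' p).trans hn
    gcongr

/-- Specialising a variable of a stable polynomial to `0` (Hurwitz). -/
theorem stable_face {V : Type*} [Fintype V] [DecidableEq V] (P : MvPolynomial V ℝ)
    (hP : RealStable P) (u : V) (z y : V → ℂ) (hzu : z u = 0) (hyu : y u = 0)
    (hz : ∀ i, i ≠ u → 0 < (z i).im)
    (hy : MvPolynomial.aeval y P ≠ 0) : MvPolynomial.aeval z P ≠ 0 := by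
  intro hz0
  obtain ⟨r, hr, hr'⟩ : ∃ r > 0, ∀ s : ℂ, ‖s‖ ≤ r → ∀ i, i ≠ u →
      0 < (z i + s * (y i - z i)).im := by
    have : ∀ᶠ s : ℂ in nhds 0, ∀ i, i ≠ u → 0 < (z i + s * (y i - z i)).im := by
      rw [Filter.eventually_all]
      intro i
      by_cases hi : i = u
      · simp [hi]
      have hc : Continuous (fun s : ℂ => (z i + s * (y i - z i)).im) := by fun_prop
      have := (hc.tendsto 0).eventually (lt_mem_nhds (a := 0) (by simpa using hz i hi))
      filter_upwards [this] with s hs _ using hs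
    obtain ⟨ε, hε, h⟩ := Metric.eventually_nhds_iff.mp this
    refine ⟨ε / 2, by positivity, fun s hs => h ?_⟩
    rw [dist_zero_right]; linarith
  let ζ : ℝ → V → ℂ := fun t i => if i = u then (t : ℂ) * Complex.I else 0
  let Q : MvPolynomial V ℂ := MvPolynomial.map (algebraMap ℝ ℂ) P
  have hQ : ∀ x : V → ℂ, MvPolynomial.aeval x P = MvPolynomial.eval x Q := by
    intro x
    rw [MvPolynomial.aeval_def, MvPolynomial.eval₂_eq_eval_map]
  let p : ℝ → Polynomial ℂ := fun t => MvPolynomial.aeval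
    (fun i => Polynomial.C (z i + ζ t i) + Polynomial.X * Polynomial.C (y i - z i)) Q
  have hev : ∀ t s, (p t).eval s =
      MvPolynomial.aeval (fun i => z i + ζ t i + s * (y i - z i)) P := by
    intro t s
    rw [hQ]
    change Polynomial.eval s (MvPolynomial.aeval _ Q) = _
    induction Q using MvPolynomial.induction_on with
    | C a => simp
    | add f g hf hg => rw [map_add, Polynomial.eval_add, hf, hg, map_add]
    | mul_X f i hf => rw [map_mul, Polynomial.eval_mul, hf, map_mul]; simp
  have hdeg : ∀ t, (p t).natDegree ≤ Q.totalDegree * 1 := by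
    intro t
    apply MvPolynomial.aeval_natDegree_le
    · exact le_rfl
    · intro i
      compute_degree
  have hb : ∀ t : ℝ, 0 < t → ‖(p t).eval 1‖ ≤ ‖(p t).eval 0‖ * (1 + 1 / r) ^ (Q.totalDegree * 1) := by
    intro t ht
    refine root_bound _ r hr ?_ _ (hdeg t)
    intro s hs
    rw [hev]
    apply hP
    intro i
    by_cases hi : i = u
    · subst hi; simp [hzu, hyu, ζ, ht]
    · simpa [ζ, hi] using hr' s hs i hi
  have hcont : ∀ s, Continuous (fun t => (p t).eval s) := by
    intro s
    simp only [hev]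
    have h1 : Continuous (fun t : ℝ => fun i => z i + ζ t i + s * (y i - z i)) := by
      refine continuous_pi fun i => ?_
      by_cases hi : i = u
      · simp only [ζ, hi, if_true]; fun_prop
      · simp only [ζ, hi, if_false]; fun_prop
    have h2 : Continuous (fun x : V → ℂ => MvPolynomial.aeval x P) := by
      simp only [hQ]
      exact MvPolynomial.continuous_eval Q
    exact h2.comp h1
  have hlim : ‖(p 0).eval 1‖ ≤ ‖(p 0).eval 0‖ * (1 + 1 / r) ^ (Q.totalDegree * 1) := by
    have t1 : Filter.Tendsto (fun t => ‖(p t).eval 1‖) (nhdsWithin 0 (Set.Ioi 0))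
        (nhds ‖(p 0).eval 1‖) := ((hcont 1).norm.tendsto 0).mono_left nhdsWithin_le_nhds
    have t2 : Filter.Tendsto (fun t => ‖(p t).eval 0‖ * (1 + 1 / r) ^ (Q.totalDegree * 1))
        (nhdsWithin 0 (Set.Ioi 0))
        (nhds (‖(p 0).eval 0‖ * (1 + 1 / r) ^ (Q.totalDegree * 1))) :=
      (((hcont 0).norm.mul continuous_const).tendsto 0).mono_left nhdsWithin_le_nhds
    refine le_of_tendsto_of_tendsto t1 t2 ?_
    filter_upwards [self_mem_nhdsWithin] with t ht using hb t ht
  have e0 : (p 0).eval 0 = 0 := by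
    rw [hev]; simpa [ζ] using hz0
  have e1 : (p 0).eval 1 = MvPolynomial.aeval y P := by
    rw [hev]; simp [ζ]
  rw [e0, e1] at hlim
  simp at hlim
  exact hy hlim
/-- Extend a graph on `V \ u` by a leaf `u` attached at `v`. -/
def leafExt {V : Type*} (u v : V) (T : SimpleGraph ({x | x ≠ u} : Set V)) : SimpleGraph V :=
  T.map (Function.Embedding.subtype _) ⊔ SimpleGraph.edge u v

section
variable {V : Type*} {u v : V}

theorem leafExt_adj (hv : v ≠ u) (T : SimpleGraph ({x | x ≠ u} : Set V)) (a b : V) :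
    (leafExt u v T).Adj a b ↔ (∃ (ha : a ≠ u) (hb : b ≠ u), T.Adj ⟨a, ha⟩ ⟨b, hb⟩) ∨
      (a = u ∧ b = v) ∨ (a = v ∧ b = u) := by
  simp only [leafExt, SimpleGraph.sup_adj, SimpleGraph.map_adj, SimpleGraph.edge_adj]
  constructor
  · rintro (⟨a', b', h, rfl, rfl⟩ | ⟨h, -⟩)
    · exact Or.inl ⟨a'.2, b'.2, h⟩
    · exact Or.inr h
  · rintro (⟨ha, hb, h⟩ | h)
    · exact Or.inl ⟨_, _, h, rfl, rfl⟩
    · refine Or.inr ⟨h, ?_⟩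
      rintro rfl
      grind

theorem leafExt_induce (hv : v ≠ u) (T : SimpleGraph ({x | x ≠ u} : Set V)) :
    (leafExt u v T).induce {x | x ≠ u} = T := by
  ext a b
  have ha : (a : V) ≠ u := a.2
  have hb : (b : V) ≠ u := b.2
  simp only [SimpleGraph.comap_adj, Function.Embedding.subtype_apply, leafExt_adj hv]
  simp [ha, hb]

open scoped Classical in
theorem leafExt_prod [Fintype V] (hv : v ≠ u) (T : SimpleGraph ({x | x ≠ u} : Set V))
    (w : Sym2 V → ℝ) : ∏ e ∈ (leafExt u v T).edgeFinset, w e =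
      w s(u, v) * ∏ e ∈ T.edgeFinset, w (e.map Subtype.val) := by
  have h : (leafExt u v T).edgeFinset =
      insert s(u, v) (T.edgeFinset.map (Function.Embedding.subtype _).sym2Map) := by
    ext e
    induction e with
    | _ a b =>
    rw [SimpleGraph.mem_edgeFinset, SimpleGraph.mem_edgeSet, leafExt_adj hv, Finset.mem_insert,
      Finset.mem_map]
    constructor
    · rintro (⟨ha, hb, h⟩ | h)
      · exact Or.inr ⟨s(⟨a, ha⟩, ⟨b, hb⟩), by simpa using h, by simp⟩
      · left; simpa using h
    · rintro (h | ⟨e, he, h⟩)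
      · right; simpa using h
      · left
        induction e with
        | _ a' b' =>
        have ha := a'.2
        have hb := b'.2
        simp at h he
        rcases h with ⟨rfl, rfl⟩ | ⟨rfl, rfl⟩
        · exact ⟨ha, hb, he⟩
        · exact ⟨hb, ha, he.symm⟩
  rw [h, Finset.prod_insert, Finset.prod_map]
  · rfl
  · rw [Finset.mem_map]
    rintro ⟨e, he, h⟩
    induction e with
    | _ a b =>
    have ha : (a : V) ≠ u := a.2
    have hb : (b : V) ≠ u := b.2
    simp [ha, hb] at h

theorem leafExt_isTree [Fintype V] (hv : v ≠ u) (T : SimpleGraph ({x | x ≠ u} : Set V))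
    (hT : T.IsTree) : (leafExt u v T).IsTree := by
  have hadj := leafExt_adj hv T
  have hr : ∀ a : ({x | x ≠ u} : Set V), (leafExt u v T).Reachable a v := by
    intro a
    have h1 := hT.connected.preconnected a ⟨v, hv⟩
    let f : T →g leafExt u v T := ⟨Subtype.val, fun {a b} h => (hadj _ _).2 (Or.inl ⟨a.2, b.2, h⟩)⟩
    exact h1.map f
  classical
  rw [SimpleGraph.isTree_iff_connected_and_card] at hT ⊢
  refine ⟨?_, ?_⟩
  · have : ∀ a, (leafExt u v T).Reachable a v := by
      intro a
      by_cases ha : a = u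
      · exact SimpleGraph.Adj.reachable ((hadj _ _).2 (by simp [ha]))
      · exact hr ⟨a, ha⟩
    rw [SimpleGraph.connected_iff]
    exact ⟨fun a b => (this a).trans (this b).symm, ⟨u⟩⟩
  · have h1 := leafExt_prod hv T (fun _ => 2)
    simp only [Finset.prod_const] at h1
    rw [← pow_succ'] at h1
    have h2 := pow_right_injective₀ (by norm_num : (0 : ℝ) < 2) (by norm_num) h1
    have h3 := hT.2
    rw [Nat.card_eq_fintype_card, ← SimpleGraph.edgeFinset_card] at h3 ⊢
    have h4 : Nat.card ({x | x ≠ u} : Set V) + 1 = Nat.card V := by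
      rw [Nat.card_eq_fintype_card, Nat.card_eq_fintype_card, Set.card_ne_eq]
      have : 0 < Fintype.card V := Fintype.card_pos_iff.mpr ⟨u⟩
      omega
    rw [h2, ← h4, ← h3]

theorem leafExt_surj [Fintype V] (T : SimpleGraph V) [Fintype (T.neighborSet u)]
    (hT : T.IsTree) (hd : T.degree u = 1) :
    ∃ v, T.Adj u v ∧ (T.induce {x | x ≠ u}).IsTree ∧ leafExt u v (T.induce {x | x ≠ u}) = T := by
  obtain ⟨v, hv, hu⟩ := SimpleGraph.degree_eq_one_iff_existsUnique_adj.mp hd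
  refine ⟨v, hv, ⟨hT.connected.induce_compl_singleton_of_degree_eq_one hd, hT.2.induce _⟩, ?_⟩
  ext a b
  rw [leafExt_adj hv.ne.symm]
  simp only [SimpleGraph.comap_adj, Function.Embedding.subtype_apply]
  constructor
  · rintro (⟨-, -, h⟩ | ⟨rfl, rfl⟩ | ⟨rfl, rfl⟩)
    · exact h
    · exact hv
    · exact hv.symm
  · intro h
    by_cases ha : a = u
    · subst ha; exact Or.inr (Or.inl ⟨rfl, hu _ h⟩)
    by_cases hb : b = u
    · subst hb; exact Or.inr (Or.inr ⟨hu _ h.symm, rfl⟩)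
    exact Or.inl ⟨ha, hb, h⟩

open scoped Classical in
theorem leafExt_degree_u [Fintype V] (hv : v ≠ u) (T : SimpleGraph ({x | x ≠ u} : Set V)) :
    (leafExt u v T).degree u = 1 := by
  rw [SimpleGraph.degree_eq_one_iff_existsUnique_adj]
  refine ⟨v, (leafExt_adj hv T u v).2 (by simp), ?_⟩
  intro y hy
  have := (leafExt_adj hv T u y).1 hy
  grind

open scoped Classical in
theorem leafExt_degree [Fintype V] [DecidableEq V] (hv : v ≠ u) (T : SimpleGraph ({x | x ≠ u} : Set V))
    (a : ({x | x ≠ u} : Set V)) :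
    (leafExt u v T).degree a = T.degree a + if (a : V) = v then 1 else 0 := by
  have ha : (a : V) ≠ u := a.2
  have h : (leafExt u v T).neighborFinset a =
      (T.neighborFinset a).map (Function.Embedding.subtype _) ∪ if (a : V) = v then {u} else ∅ := by
    ext b
    rw [SimpleGraph.mem_neighborFinset, leafExt_adj hv, Finset.mem_union, Finset.mem_map]
    simp only [SimpleGraph.mem_neighborFinset]
    constructor
    · rintro (⟨_, hb, h⟩ | ⟨h, -⟩ | ⟨h, rfl⟩)
      · exact Or.inl ⟨⟨b, hb⟩, h, rfl⟩
      · exact absurd h ha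
      · right; simp [h]
    · rintro (⟨b', h, rfl⟩ | h)
      · exact Or.inl ⟨ha, b'.2, h⟩
      · right; right
        split_ifs at h with h'
        · exact ⟨h', by simpa using h⟩
        · simp at h
  rw [← SimpleGraph.card_neighborFinset_eq_degree, h, Finset.card_union_of_disjoint,
    Finset.card_map, SimpleGraph.card_neighborFinset_eq_degree]
  · split_ifs <;> simp
  · rw [Finset.disjoint_left]
    intro b hb hb'
    rw [Finset.mem_map] at hb
    obtain ⟨b', -, rfl⟩ := hb
    have hne : (b' : V) ≠ u := b'.2
    split_ifs at hb'
    · exact hne (by simpa using hb')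
    · simp at hb'

end

open scoped Classical in
/-- The tree sum with full degrees as exponents. -/
noncomputable def treeSum {V : Type*} [Fintype V] [DecidableEq V] (G : SimpleGraph V) (w : Sym2 V → ℝ)
    (y : V → ℂ) : ℂ :=
  ∑ T ∈ Finset.univ.filter (fun T : SimpleGraph V => T ≤ G ∧ T.IsTree),
    ((∏ e ∈ T.edgeFinset, w e : ℝ) : ℂ) * ∏ v, y v ^ (T.degree v)

section
variable {V : Type*} [Fintype V] [DecidableEq V]

open scoped Classical in
theorem aeval_treePoly (G : SimpleGraph V) (w : Sym2 V → ℝ) (y : V → ℂ) :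
    MvPolynomial.aeval y (treePoly G w) =
      ∑ T ∈ Finset.univ.filter (fun T : SimpleGraph V => T ≤ G ∧ T.IsTree),
        ((∏ e ∈ T.edgeFinset, w e : ℝ) : ℂ) * ∏ v, y v ^ (T.degree v - 1) := by
  unfold treePoly
  rw [map_sum]
  refine Finset.sum_congr rfl fun T _ => ?_
  rw [map_mul, MvPolynomial.algHom_C]
  congr 1
  simp only [map_prod, map_pow, MvPolynomial.aeval_X]

theorem treeSum_ne_zero (G : SimpleGraph V) (w : Sym2 V → ℝ) (y : V → ℂ)
    (hy : ∀ v, y v ≠ 0) (h : MvPolynomial.aeval y (treePoly G w) ≠ 0) : treeSum G w y ≠ 0 := by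
  classical
  rcases subsingleton_or_nontrivial V with hV | hV
  · have : treeSum G w y = MvPolynomial.aeval y (treePoly G w) := by
      rw [aeval_treePoly]
      unfold treeSum
      refine Finset.sum_congr rfl fun T _ => ?_
      congr 1
      refine Finset.prod_congr rfl fun v _ => ?_
      have : T.degree v = 0 := by
        by_contra h0
        obtain ⟨b, hb⟩ := (T.degree_pos_iff_exists_adj v).1 (Nat.pos_of_ne_zero h0)
        exact hb.ne (Subsingleton.elim _ _)
      rw [this]
    rwa [this]
  · have : treeSum G w y = MvPolynomial.aeval y (treePoly G w) * ∏ v, y v := by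
      rw [aeval_treePoly, Finset.sum_mul]
      unfold treeSum
      refine Finset.sum_congr rfl fun T hT => ?_
      rw [mul_assoc, ← Finset.prod_mul_distrib]
      congr 1
      refine Finset.prod_congr rfl fun v _ => ?_
      have hc : T.Connected := (Finset.mem_filter.1 hT).2.2.1
      have := hc.preconnected.degree_pos_of_nontrivial v
      rw [← pow_succ, Nat.sub_add_cancel this]
    rw [this]
    exact mul_ne_zero h (Finset.prod_ne_zero_iff.2 fun v _ => hy v)

open scoped Classical in
theorem face_formula [Nontrivial V] (G : SimpleGraph V) (w : Sym2 V → ℝ) (u : V) (y : V → ℂ) :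
    MvPolynomial.aeval (Function.update y u 0) (treePoly G w) *
        ∏ v : ({x | x ≠ u} : Set V), y v =
      (∑ v ∈ Finset.univ.filter (fun v : V => G.Adj u v), (w s(u, v) : ℂ) * y v) *
        treeSum (G.induce {x | x ≠ u}) (fun e => w (e.map Subtype.val)) (fun v => y v) := by
  have hsplit : ∀ f : V → ℂ, ∏ v, f v = f u * ∏ v : ({x | x ≠ u} : Set V), f v := by
    intro f
    exact Fintype.prod_eq_mul_prod_subtype_ne f u
  rw [aeval_treePoly, Finset.sum_mul]
  have h1 : ∀ T ∈ Finset.univ.filter (fun T : SimpleGraph V => T ≤ G ∧ T.IsTree),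
      ((∏ e ∈ T.edgeFinset, w e : ℝ) : ℂ) * (∏ v, Function.update y u 0 v ^ (T.degree v - 1)) *
        ∏ v : ({x | x ≠ u} : Set V), y v =
      if T.degree u = 1 then ((∏ e ∈ T.edgeFinset, w e : ℝ) : ℂ) *
        ∏ v : ({x | x ≠ u} : Set V), y v ^ (T.degree (v : V)) else 0 := by
    intro T hT
    have hc : T.Connected := (Finset.mem_filter.1 hT).2.2.1
    have hpos := fun v => hc.preconnected.degree_pos_of_nontrivial v
    rw [hsplit, Function.update_self]
    split_ifs with hd
    · rw [hd, Nat.sub_self, pow_zero, one_mul, mul_assoc, ← Finset.prod_mul_distrib]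
      congr 1
      refine Finset.prod_congr rfl fun v _ => ?_
      rw [Function.update_of_ne v.2, ← pow_succ, Nat.sub_add_cancel (hpos v)]
    · have := hpos u
      rw [zero_pow (by omega)]
      simp
  rw [Finset.sum_congr rfl h1, ← Finset.sum_filter, treeSum, Finset.sum_mul_sum,
    ← Finset.sum_product']
  symm
  refine Finset.sum_bij (fun p _ => leafExt u p.1 p.2) ?_ ?_ ?_ ?_
  · rintro ⟨v, T⟩ hp
    simp only [Finset.mem_product, Finset.mem_filter, Finset.mem_univ, true_and] at hp ⊢
    obtain ⟨hv, hle, hT⟩ := hp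
    refine ⟨⟨?_, leafExt_isTree hv.ne.symm T hT⟩, leafExt_degree_u hv.ne.symm T⟩
    intro a b hab
    rcases (leafExt_adj hv.ne.symm T a b).1 hab with ⟨ha, hb, h⟩ | ⟨rfl, rfl⟩ | ⟨rfl, rfl⟩
    · exact hle h
    · exact hv
    · exact hv.symm
  · rintro ⟨v, T⟩ hp ⟨v', T'⟩ hp' heq
    simp only [Finset.mem_product, Finset.mem_filter, Finset.mem_univ, true_and] at hp hp' heq
    have hv := hp.1.ne.symm
    have hv' := hp'.1.ne.symm
    have e1 : T = T' := by
      rw [← leafExt_induce hv T, ← leafExt_induce hv' T', heq]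
    have e2 : v = v' := by
      have : (leafExt u v' T').Adj u v := by
        rw [← heq]; exact (leafExt_adj hv T u v).2 (by simp)
      have := (leafExt_adj hv' T' u v).1 this
      grind
    rw [e1, e2]
  · intro T hT
    simp only [Finset.mem_filter, Finset.mem_univ, true_and] at hT
    obtain ⟨⟨hle, hT⟩, hd⟩ := hT
    obtain ⟨v, hv, hT', he⟩ := leafExt_surj T hT hd
    refine ⟨(v, T.induce {x | x ≠ u}), ?_, he⟩
    simp only [Finset.mem_product, Finset.mem_filter, Finset.mem_univ, true_and]
    exact ⟨hle hv, fun a b h => hle h, hT'⟩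
  · rintro ⟨v, T⟩ hp
    simp only [Finset.mem_product, Finset.mem_filter, Finset.mem_univ, true_and] at hp
    have hv := hp.1.ne.symm
    simp only
    rw [leafExt_prod hv]
    simp only [leafExt_degree hv, pow_add, Finset.prod_mul_distrib]
    have : ∏ a : ({x | x ≠ u} : Set V), y a ^ (if (a : V) = v then 1 else 0) = y v := by
      rw [Finset.prod_eq_single ⟨v, hv⟩]
      · simp
      · intro b _ hb
        rw [if_neg, pow_zero]
        intro h
        exact hb (Subtype.ext h)
      · simp
    rw [this]
    have hr : ∀ a b c d e f : ℂ, c = e → d = f → a * b * (c * d) = a * e * (f * b) := by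
      rintro a b c d e f rfl rfl
      ring
    rw [Complex.ofReal_mul]
    apply hr
    · congr!
    · congr!

theorem exists_aeval_ne_zero {V : Type*} (P : MvPolynomial V ℝ) (hP : P ≠ 0) :
    ∃ y : V → ℝ, MvPolynomial.eval y P ≠ 0 := by
  by_contra! h
  exact hP (MvPolynomial.funext (by simpa using h))

/-- If the polynomial of `G - u` is nonzero, so is that of `G`, even on the face `x_u = 0`. -/
theorem face_ne_zero [Nontrivial V] (G : SimpleGraph V) (w : Sym2 V → ℝ) (u : V)
    (hG : G.Connected) (hw : ∀ e ∈ G.edgeSet, w e ≠ 0)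
    (hQ : treePoly (G.induce {x | x ≠ u}) (fun e => w (e.map Subtype.val)) ≠ 0) :
    ∃ y : V → ℂ, y u = 0 ∧ MvPolynomial.aeval y (treePoly G w) ≠ 0 := by
  classical
  set Q := treePoly (G.induce {x | x ≠ u}) (fun e => w (e.map Subtype.val)) with hQdef
  let L : MvPolynomial V ℝ :=
    ∑ v ∈ Finset.univ.filter (fun v : V => G.Adj u v), MvPolynomial.C (w s(u, v)) * MvPolynomial.X v
  have hL : L ≠ 0 := by
    obtain ⟨v, hv⟩ := (G.degree_pos_iff_exists_adj u).1
      (hG.preconnected.degree_pos_of_nontrivial u)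
    intro h0
    have h1 := congrArg (MvPolynomial.eval (Pi.single v 1)) h0
    simp only [L, map_sum, map_mul, MvPolynomial.eval_C, MvPolynomial.eval_X, map_zero] at h1
    rw [Finset.sum_eq_single v] at h1
    · simp at h1
      exact hw _ hv h1
    · intro b _ hb
      simp [hb]
    · intro h
      simp [hv] at h
  have hR : MvPolynomial.rename (Subtype.val : ({x | x ≠ u} : Set V) → V) Q ≠ 0 := by
    intro h
    exact hQ (MvPolynomial.rename_injective _ Subtype.val_injective (by rw [h, map_zero]))
  have hX : (∏ v : V, (MvPolynomial.X v : MvPolynomial V ℝ)) ≠ 0 :=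
    Finset.prod_ne_zero_iff.2 fun v _ => MvPolynomial.X_ne_zero v
  obtain ⟨y, hy⟩ := exists_aeval_ne_zero _ (mul_ne_zero (mul_ne_zero hL hX) hR)
  rw [map_mul, map_mul] at hy
  have hy1 := left_ne_zero_of_mul (left_ne_zero_of_mul hy)
  have hy2 := right_ne_zero_of_mul (left_ne_zero_of_mul hy)
  have hy3 := right_ne_zero_of_mul hy
  rw [MvPolynomial.eval_rename] at hy3
  rw [map_prod, Finset.prod_ne_zero_iff] at hy2
  simp only [MvPolynomial.eval_X, Finset.mem_univ, true_imp_iff] at hy2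
  have key := face_formula G w u (fun v => (y v : ℂ))
  refine ⟨Function.update (fun v => (y v : ℂ)) u 0, by simp, ?_⟩
  refine left_ne_zero_of_mul (b := ∏ v : ({x | x ≠ u} : Set V), (y v : ℂ)) ?_
  rw [key]
  refine mul_ne_zero ?_ ?_
  · have : ((MvPolynomial.eval y L : ℝ) : ℂ) ≠ 0 := by exact_mod_cast hy1
    convert this using 1
    simp [L]
  · apply treeSum_ne_zero
    · intro v
      exact_mod_cast hy2 v
    · rw [← hQdef]
      have h4 : MvPolynomial.aeval (fun v : ({x | x ≠ u} : Set V) => ((y v : ℝ) : ℂ)) Q =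
          ((MvPolynomial.eval (y ∘ Subtype.val) Q : ℝ) : ℂ) := by
        have := MvPolynomial.aeval_algebraMap_apply ℂ
          (fun v : ({x | x ≠ u} : Set V) => y v) Q
        rw [MvPolynomial.aeval_eq_eval] at this
        exact this
      rw [h4]
      exact_mod_cast hy3

end

theorem treePoly_ne_zero (n : ℕ) : ∀ {V : Type*} [Fintype V] [DecidableEq V]
    (G : SimpleGraph V) (w : Sym2 V → ℝ), Fintype.card V = n → G.Connected →
    (∀ e ∈ G.edgeSet, w e ≠ 0) → treePoly G w ≠ 0 := by
  induction n with
  | zero =>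
    intro V _ _ G w hn hG _
    have := Fintype.card_eq_zero_iff.1 hn
    exact (this.false hG.nonempty.some).elim
  | succ n ih =>
    intro V _ _ G w hn hG hw
    classical
    rcases subsingleton_or_nontrivial V with hV | hV
    · have := hG.nonempty
      intro h0
      have h1 := congrArg (MvPolynomial.aeval (fun _ : V => (1 : ℂ))) h0
      rw [aeval_treePoly, map_zero, Finset.sum_eq_single ⊥] at h1
      · have hE : (⊥ : SimpleGraph V).edgeFinset = ∅ := SimpleGraph.edgeFinset_bot
        simp [Finset.prod_eq_zero_iff] at h1
      · intro T _ hT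
        exact (hT (Subsingleton.elim _ _)).elim
      · intro h
        exact (h (by simp [SimpleGraph.IsTree.of_subsingleton])).elim
    · obtain ⟨u, hu⟩ := hG.exists_connected_induce_compl_singleton_of_finite_nontrivial
      have hQ := ih (G.induce {x | x ≠ u}) (fun e => w (e.map Subtype.val))
        (by rw [Set.card_ne_eq]; omega) hu (by
          intro e he
          apply hw
          induction e with
          | _ a b => exact he)
      obtain ⟨y, -, hy⟩ := face_ne_zero G w u hG hw hQ
      intro h0
      rw [h0] at hy
      simp at hy

theorem vertex_sign {V : Type*} [Fintype V] [DecidableEq V] [Nontrivial V] (G : SimpleGraph V)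
    (w : Sym2 V → ℝ) (hconn : G.Connected) (u : V)
    (hu : (G.induce {x | x ≠ u}).Connected)
    (hw : ∀ e ∈ G.edgeSet, w e ≠ 0)
    (hstab : RealStable (treePoly G w)) (a b : V) (ha : G.Adj u a) (hb : G.Adj u b)
    (hpa : 0 < w s(u, a)) (hpb : w s(u, b) < 0) : False := by
  classical
  have hQ := treePoly_ne_zero _ (G.induce {x | x ≠ u}) (fun e => w (e.map Subtype.val))
    rfl hu (by
      intro e he
      apply hw
      induction e with
      | _ a b => exact he)
  obtain ⟨y, hyu, hy⟩ := face_ne_zero G w u hconn hw hQ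
  have hab : a ≠ b := by rintro rfl; linarith
  -- a positive solution of the linear form
  obtain ⟨c, hc, hc0⟩ : ∃ c : V → ℝ, (∀ v, 0 < c v) ∧
      ∑ v ∈ Finset.univ.filter (fun v : V => G.Adj u v), w s(u, v) * c v = 0 := by
    set F := Finset.univ.filter (fun v : V => G.Adj u v) with hF
    have haF : a ∈ F := by simp [hF, ha]
    have hbF : b ∈ F := by simp [hF, hb]
    have hsum : ∀ (d : V) (t : ℝ), d ∈ F →
        ∑ v ∈ F, w s(u, v) * (1 + if v = d then t else 0) =
          ∑ v ∈ F, w s(u, v) + w s(u, d) * t := by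
      intro d t hd
      simp only [mul_add, mul_one, Finset.sum_add_distrib]
      congr 1
      rw [Finset.sum_eq_single d]
      · simp
      · intro x _ hx; simp [hx]
      · intro h; exact (h hd).elim
    have hpos : ∀ (d : V) (t : ℝ), 0 ≤ t → ∀ v, 0 < 1 + if v = d then t else 0 := by
      intro d t ht v
      split_ifs <;> linarith
    rcases le_total 0 (∑ v ∈ F, w s(u, v)) with hS | hS
    · refine ⟨fun v => 1 + if v = b then (∑ v ∈ F, w s(u, v)) / (- w s(u, b)) else 0,
        hpos b _ (div_nonneg hS (by linarith)), ?_⟩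
      rw [hsum b _ hbF]
      have := hpb.ne
      rw [div_neg, mul_neg, mul_div_cancel₀ _ this]
      ring
    · refine ⟨fun v => 1 + if v = a then (- ∑ v ∈ F, w s(u, v)) / (w s(u, a)) else 0,
        hpos a _ (div_nonneg (by linarith) hpa.le), ?_⟩
      rw [hsum a _ haF]
      field_simp
      ring
  let z : V → ℂ := fun v => (c v : ℂ) * Complex.I
  have hz : ∀ v, 0 < (z v).im := by intro v; simpa [z] using hc v
  have key := face_formula G w u z
  have hL : ∑ v ∈ Finset.univ.filter (fun v : V => G.Adj u v), (w s(u, v) : ℂ) * z v = 0 := by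
    simp only [z, ← mul_assoc, ← Finset.sum_mul]
    have : (∑ v ∈ Finset.univ.filter (fun v : V => G.Adj u v), (w s(u, v) : ℂ) * (c v : ℂ)) = 0 := by
      exact_mod_cast congrArg (fun x : ℝ => (x : ℂ)) hc0
    rw [this, zero_mul]
  rw [hL, zero_mul] at key
  have hne : ∏ v : ({x | x ≠ u} : Set V), z v ≠ 0 := by
    refine Finset.prod_ne_zero_iff.2 fun v _ h => ?_
    have := hz v
    rw [h] at this
    simp at this
  refine stable_face _ hstab u (Function.update z u 0) y (by simp) hyu ?_ hy
    ((mul_eq_zero.1 key).resolve_right hne)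
  intro i hi
  rw [Function.update_of_ne hi]
  exact hz i

theorem stmt_15 {V : Type*} [Fintype V] [DecidableEq V] (G : SimpleGraph V)
    (w : Sym2 V → ℝ)
    (hcard : 3 ≤ Fintype.card V) (hconn : G.Connected)
    (h2conn : ∀ v : V, (G.induce {u | u ≠ v}).Connected)
    (hw : ∀ e ∈ G.edgeSet, w e ≠ 0)
    (hstab : RealStable (treePoly G w)) :
    (∀ e ∈ G.edgeSet, 0 < w e) ∨ (∀ e ∈ G.edgeSet, w e < 0) := by
  have hnt : Nontrivial V := Fintype.one_lt_card_iff_nontrivial.1 (by omega)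
  have hv : ∀ u a b, G.Adj u a → G.Adj u b → 0 < w s(u, a) → 0 < w s(u, b) := by
    intro u a b ha hb hpa
    by_contra hn
    exact vertex_sign G w hconn u (h2conn u) hw hstab a b ha hb hpa
      (lt_of_le_of_ne (not_lt.1 hn) (hw _ hb))
  -- positivity at a vertex propagates along walks
  have hprop : ∀ u v, G.Reachable u v → (∀ a, G.Adj u a → 0 < w s(u, a)) →
      ∀ a, G.Adj v a → 0 < w s(v, a) := by
    rintro u v ⟨p⟩
    induction p with
    | nil => exact id
    | cons h p ih =>
      intro hu
      apply ih
      intro a ha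
      refine hv _ _ _ h.symm ha ?_
      rw [Sym2.eq_swap]
      exact hu _ h
  by_cases hpos : ∃ u a, G.Adj u a ∧ 0 < w s(u, a)
  · left
    obtain ⟨u, a, ha, hp⟩ := hpos
    intro e he
    induction e with
    | _ x y =>
      exact hprop u x (hconn.preconnected u x) (fun b hb => hv u a b ha hb hp) y he
  · right
    intro e he
    induction e with
    | _ x y =>
      refine lt_of_le_of_ne (not_lt.1 fun h => hpos ⟨x, y, he, h⟩) (hw _ he)
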